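/- arXiv:2211.06521 — 4 statements merged into one kernel-verified Lean document; each statement's English description precedes it below -/
import Mathlib

section
/- Let k ≥ 1 and let G be a multigraph with n ≥ 1 vertices and m edges such that every maximal k-edge-connected subgraph of G is trivial, i.e., consists of a single vertex. Then m ≤ (k−1)(n−1). -/
universe u

structure Multigraph (V : Type u) where
  edges : Multiset (Sym2 V)
  loopless : ∀ e ∈ edges, ¬ e.IsDiag

namespace Multigraph

variable {V : Type u}

/-- Reachability via the edges of a multiset of (undirected) edges. -/
def MReach (F : Multiset (Sym2 V)) : V → V → Prop :=
  Relation.ReflTransGen (fun x y => s(x, y) ∈ F)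

/-- Reachability in a multigraph. -/
def Reachable (G : Multigraph V) : V → V → Prop := MReach G.edges

open Classical in
/-- Delete a multiset of edges. -/
noncomputable def deleteEdges (G : Multigraph V) (F : Multiset (Sym2 V)) : Multigraph V :=
  ⟨G.edges - F, fun e he => G.loopless e (Multiset.mem_of_le (tsub_le_self) he)⟩

/-- `lam G x y` : the minimum number of edges whose deletion disconnects `x` from `y`
(`⊤` if no set of edges disconnects them, e.g. when `x = y`). -/
noncomputable def lam (G : Multigraph V) (x y : V) : ℕ∞ :=
  sInf {n : ℕ∞ | ∃ F : Multiset (Sym2 V), F ≤ G.edges ∧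
      ¬ (G.deleteEdges F).Reachable x y ∧ n = (Multiset.card F : ℕ∞)}

open Classical in
/-- The multigraph with edge multiset `F`, discarding self-loops. -/
noncomputable def ofEdges (F : Multiset (Sym2 V)) : Multigraph V :=
  ⟨F.filter (fun e => ¬ e.IsDiag), fun e he => (Multiset.mem_filter.mp he).2⟩

open Classical in
/-- The subgraph of `G` induced by the vertex set `S`. -/
noncomputable def induce (G : Multigraph V) (S : Set V) : Multigraph V :=
  ⟨G.edges.filter (fun e => ∀ v ∈ e, v ∈ S), fun e he =>
      G.loopless e (Multiset.mem_filter.mp he).1⟩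

/-- The induced subgraph `G[S]` is `k`-edge-connected. -/
def IsKEdgeConnectedSet (G : Multigraph V) (k : ℕ) (S : Set V) : Prop :=
  S.Nonempty ∧ ∀ x ∈ S, ∀ y ∈ S, (k : ℕ∞) ≤ (G.induce S).lam x y

/-- `G[S]` is a maximal `k`-edge-connected subgraph of `G`. -/
def IsMaxKEdgeConnectedSubgraph (G : Multigraph V) (k : ℕ) (S : Set V) : Prop :=
  G.IsKEdgeConnectedSet k S ∧
    ∀ T : Set V, S ⊆ T → G.IsKEdgeConnectedSet k T → T = S


end Multigraph


open Classical in
theorem Multigraph.induce_edges_le {V : Type u} (G : Multigraph V) (S : Set V) :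
    (G.induce S).edges ≤ G.edges := by
  unfold Multigraph.induce
  exact Multiset.filter_le _ _

open Classical in
theorem Multigraph.mem_of_mem_induce {V : Type u} (G : Multigraph V) (S : Set V) (e : Sym2 V)
    (he : e ∈ (G.induce S).edges) : ∀ v ∈ e, v ∈ S := by
  unfold Multigraph.induce at he
  exact (Multiset.mem_filter.mp he).2

open Classical in
theorem Multigraph.le_induce_edges {V : Type u} (G : Multigraph V) (S : Set V)
    (D : Multiset (Sym2 V)) (hD : D ≤ G.edges) (h : ∀ e ∈ D, ∀ v ∈ e, v ∈ S) :
    D ≤ (G.induce S).edges := by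
  unfold Multigraph.induce
  exact Multiset.le_filter.mpr ⟨hD, h⟩

open Classical in
theorem Multigraph.induce_bound {V : Type u} [Fintype V] (k : ℕ) (G : Multigraph V)
    (h : ∀ S : Set V, G.IsKEdgeConnectedSet k S → S.ncard ≤ 1) :
    ∀ (n : ℕ) (S : Set V), S.Nonempty → S.ncard = n →
      Multiset.card (G.induce S).edges ≤ (k - 1) * (n - 1) := by
  intro n
  induction n using Nat.strong_induction_on with
  | _ n ih =>
  intro S hS hn
  by_cases h1 : n ≤ 1
  · have hc : S.ncard ≤ 1 := by omega
    have h0 : (G.induce S).edges = 0 := by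
      rw [Multiset.eq_zero_iff_forall_notMem]
      intro e he
      have hl := (G.induce S).loopless e he
      have hm := G.mem_of_mem_induce S e he
      induction e with
      | _ a b =>
      apply hl
      rw [Sym2.mk_isDiag_iff]
      exact (Set.ncard_le_one (Set.toFinite S)).mp hc a (hm a (by simp)) b (hm b (by simp))
    rw [h0]; simp
  · have hnk : ¬ G.IsKEdgeConnectedSet k S := fun hk => by
      have := h S hk
      omega
    have hex : ∃ x ∈ S, ∃ y ∈ S, (G.induce S).lam x y < k := by
      by_contra hcon
      push Not at hcon
      exact hnk ⟨hS, hcon⟩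
    obtain ⟨x, hx, y, hy, hlt⟩ := hex
    obtain ⟨_, ⟨F, hF, hr, rfl⟩, hlt⟩ := sInf_lt_iff.mp hlt
    have hFk : Multiset.card F < k := by exact_mod_cast hlt
    set D := (G.induce S).edges - F with hD
    have hr' : ¬ Multigraph.MReach D x y := hr
    have hDS : D ≤ (G.induce S).edges := tsub_le_self
    set A : Set V := {v | v ∈ S ∧ Multigraph.MReach D x v} with hA
    set B : Set V := S \ A with hB
    have hAS : A ⊆ S := fun v hv => hv.1
    have hxA : x ∈ A := ⟨hx, Relation.ReflTransGen.refl⟩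
    have hyB : y ∈ B := ⟨hy, fun hh => hr' hh.2⟩
    have hcard : B.ncard + A.ncard = S.ncard :=
      Set.ncard_sdiff_add_ncard_of_subset hAS (Set.toFinite S)
    have hApos : 0 < A.ncard := (Set.ncard_pos (Set.toFinite A)).mpr ⟨x, hxA⟩
    have hBpos : 0 < B.ncard := (Set.ncard_pos (Set.toFinite B)).mpr ⟨y, hyB⟩
    have iA := ih A.ncard (by omega) A ⟨x, hxA⟩ rfl
    have iB := ih B.ncard (by omega) B ⟨y, hyB⟩ rfl
    have hDG : D ≤ G.edges := hDS.trans (G.induce_edges_le S)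
    have hfA : D.filter (fun e => ∀ v ∈ e, v ∈ A) ≤ (G.induce A).edges :=
      
      G.le_induce_edges A _ ((Multiset.filter_le _ _).trans hDG)
        fun e he => (Multiset.mem_filter.mp he).2
    have hfB : D.filter (fun e => ¬ ∀ v ∈ e, v ∈ A) ≤ (G.induce B).edges := by
      refine G.le_induce_edges B _ ((Multiset.filter_le _ _).trans hDG) ?_
      intro e he
      obtain ⟨heD, hnA⟩ := Multiset.mem_filter.mp he
      have hm := G.mem_of_mem_induce S e (Multiset.mem_of_le hDS heD)
      induction e with
      | _ a b =>
      have ha : a ∈ S := hm a (by simp)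
      have hb : b ∈ S := hm b (by simp)
      have hab : a ∈ A → b ∈ A := fun q => ⟨hb, q.2.tail heD⟩
      have hba : b ∈ A → a ∈ A := fun q => ⟨ha, q.2.tail (by rw [Sym2.eq_swap]; exact heD)⟩
      simp only [Sym2.mem_iff, forall_eq_or_imp, forall_eq] at hnA ⊢
      exact ⟨⟨ha, fun q => hnA ⟨q, hab q⟩⟩, ⟨hb, fun q => hnA ⟨hba q, q⟩⟩⟩
    have cA := Multiset.card_le_card hfA
    have cB := Multiset.card_le_card hfB
    have cD : Multiset.card D = Multiset.card (D.filter (fun e => ∀ v ∈ e, v ∈ A)) +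
        Multiset.card (D.filter (fun e => ¬ ∀ v ∈ e, v ∈ A)) := by
      rw [← Multiset.card_add, Multiset.filter_add_not]
    have cS : Multiset.card (G.induce S).edges = Multiset.card D + Multiset.card F := by
      rw [← Multiset.card_add, hD, tsub_add_cancel_of_le hF]
    have hn1 : n - 1 = (A.ncard - 1) + (B.ncard - 1) + 1 := by omega
    rw [hn1, mul_add, mul_add, mul_one]
    omega

theorem all_max_kec_trivial_edge_bound {V : Type u} [Fintype V]
    (k : ℕ) (hk : 1 ≤ k) (G : Multigraph V) (hn : 1 ≤ Fintype.card V)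
    (htriv : ∀ S : Set V, G.IsMaxKEdgeConnectedSubgraph k S → ∃ v : V, S = {v}) :
    Multiset.card G.edges ≤ (k - 1) * (Fintype.card V - 1) := by
  have h : ∀ S : Set V, G.IsKEdgeConnectedSet k S → S.ncard ≤ 1 := by
    intro S hS
    obtain ⟨M, hSM, hM⟩ := (Set.toFinite {T : Set V | G.IsKEdgeConnectedSet k T}).exists_le_maximal hS
    obtain ⟨v, hv⟩ := htriv M ⟨hM.1, fun T hMT hT => Set.Subset.antisymm (hM.2 hT hMT) hMT⟩
    have := Set.ncard_le_ncard hSM (Set.toFinite M)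
    rw [hv, Set.ncard_singleton] at this
    exact this
  have : Nonempty V := Fintype.card_pos_iff.mp hn
  have hb := Multigraph.induce_bound k G h _ Set.univ Set.univ_nonempty rfl
  rw [Set.ncard_univ, Nat.card_eq_fintype_card] at hb
  have he : (G.induce Set.univ).edges = G.edges := by
    simp [Multigraph.induce]
  rwa [he] at hb
end

section
/- Let k ≥ 3, let V be a set of n vertices, and let G_0 = (V, ∅) be the empty multigraph on V. Let e_1, …, e_m be any sequence of edges joining vertices of V (repetitions allowed), and for i = 1, …, m let G_i = (V, {e_1, …, e_i}) be the multigraph with edge multiset {e_1, …, e_i}. Then the number of indices i ∈ {1, …, m} such that the two endpoints of e_i lie in two different maximal k-edge-connected subgraphs of G_{i−1} is at most k(n − 1). -/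
universe u

namespace Multigraph

variable {V : Type u}

/-- The multigraph on `V` consisting of the first `i` edges of the sequence `e`. -/
noncomputable def graphOfPrefix {m : ℕ} (e : Fin m → Sym2 V) (i : ℕ) : Multigraph V :=
  ofEdges (((List.ofFn e).take i : List (Sym2 V)) : Multiset (Sym2 V))

end Multigraph

namespace Multigraph

open Classical in
/-- Chosen index sets below `i` embed in the prefix multiset. -/
lemma map_le_prefix {V : Type u} {m : ℕ} (e : Fin m → Sym2 V) (i : ℕ)
    (s : Finset (Fin m)) (hs : ∀ j ∈ s, (j : ℕ) < i) :
    s.val.map e ≤ (((List.ofFn e).take i : List (Sym2 V)) : Multiset (Sym2 V)) := by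
  rw [List.ofFn_eq_map, ← List.map_take, ← Multiset.map_coe]
  apply Multiset.map_le_map
  rw [Multiset.le_iff_subset s.nodup]
  intro j hj
  have hji := hs j hj
  rw [Multiset.mem_coe, List.mem_take_iff_getElem]
  refine ⟨j, ?_, ?_⟩
  · simp [hji]
  · simp

open Classical in
/-- If every cut of `T` is crossed by at least `k` edges then `G[T]` is `k`-edge-connected. -/
lemma isKEdgeConnectedSet_of_cuts {V : Type u} (G : Multigraph V) (k : ℕ) (T : Set V)
    (hT : T.Nonempty)
    (h : ∀ A : Set V, A ⊆ T → A.Nonempty → (T \ A).Nonempty →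
      ∃ M : Multiset (Sym2 V), M ≤ (G.induce T).edges ∧ k ≤ Multiset.card M ∧
        ∀ f ∈ M, (∃ v ∈ f, v ∈ A) ∧ (∃ v ∈ f, v ∈ T \ A)) :
    G.IsKEdgeConnectedSet k T := by
  refine ⟨hT, fun x hx y hy => ?_⟩
  unfold lam
  refine le_sInf ?_
  rintro n ⟨F, hF, hr, rfl⟩
  obtain ⟨M, hM, hk, hc⟩ := h {v | v ∈ T ∧ ((G.induce T).deleteEdges F).Reachable x v}
    (fun v hv => hv.1) ⟨x, hx, Relation.ReflTransGen.refl⟩ ⟨y, hy, fun hh => hr hh.2⟩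
  have hMF : M ≤ F := by
    rw [Multiset.le_iff_count]
    intro f
    by_cases hf : f ∈ M
    · obtain ⟨⟨v, hvf, hv⟩, ⟨w, hwf, hw⟩⟩ := hc f hf
      have hne : v ≠ w := by
        rintro rfl
        exact hw.2 hv
      have hfe : f = s(v, w) := ((Sym2.mem_and_mem_iff hne).1 ⟨hvf, hwf⟩)
      have hnot : f ∉ (G.induce T).edges - F := by
        intro hin
        apply hw.2
        refine ⟨hw.1, Relation.ReflTransGen.tail hv.2 ?_⟩
        rw [← hfe]
        exact hin
      have h0 := Multiset.count_eq_zero.2 hnot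
      rw [Multiset.count_sub] at h0
      have h1 := Multiset.le_iff_count.1 hM f
      omega
    · rw [Multiset.count_eq_zero.2 hf]
      exact Nat.zero_le _
  exact_mod_cast hk.trans (Multiset.card_le_card hMF)

lemma exists_max {V : Type u} [Fintype V] (G : Multigraph V) (k : ℕ) (T : Set V)
    (hT : G.IsKEdgeConnectedSet k T) :
    ∃ S, T ⊆ S ∧ G.IsMaxKEdgeConnectedSubgraph k S := by
  obtain ⟨S, hTS, hS⟩ := (Set.toFinite {S : Set V | G.IsKEdgeConnectedSet k S}).exists_le_maximal hT
  exact ⟨S, hTS, hS.prop, fun U hSU hU => (hS.eq_of_subset hU hSU).symm⟩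

open Classical in
lemma count_inside {V : Type u} [Fintype V]
    (k : ℕ) {m : ℕ} (e : Fin m → Sym2 V) (he : ∀ i : Fin m, ¬ (e i).IsDiag)
    (I : Finset (Fin m))
    (hI : ∀ i ∈ I, ¬ ∃ S : Set V,
        (graphOfPrefix e (i : ℕ)).IsMaxKEdgeConnectedSubgraph k S ∧ ∀ v ∈ e i, v ∈ S) :
    ∀ (n : ℕ) (T : Finset V), T.card = n + 1 →
      (I.filter (fun i => ∀ v ∈ e i, v ∈ T)).card ≤ k * n := by
  intro n
  induction n using Nat.strong_induction_on with
  | _ n ih =>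
  intro T hTn
  by_cases hcut : ∃ A ⊆ T, A.Nonempty ∧ (T \ A).Nonempty ∧
      (I.filter (fun i => (∀ v ∈ e i, v ∈ T) ∧ (∃ v ∈ e i, v ∈ A) ∧
        (∃ v ∈ e i, v ∈ T \ A))).card ≤ k
  · obtain ⟨A, hA, hA0, hB0, hc⟩ := hcut
    have h1 := Finset.card_sdiff_add_card_eq_card hA
    have h2 := hA0.card_pos
    have h3 := hB0.card_pos
    have ihA := ih (A.card - 1) (by omega) A (by omega)
    have ihB := ih ((T \ A).card - 1) (by omega) (T \ A) (by omega)
    have hsub : I.filter (fun i => ∀ v ∈ e i, v ∈ T) ⊆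
        (I.filter (fun i => ∀ v ∈ e i, v ∈ A) ∪ I.filter (fun i => ∀ v ∈ e i, v ∈ T \ A)) ∪
        I.filter (fun i => (∀ v ∈ e i, v ∈ T) ∧ (∃ v ∈ e i, v ∈ A) ∧
          (∃ v ∈ e i, v ∈ T \ A)) := by
      intro i hi
      simp only [Finset.mem_union, Finset.mem_filter, Finset.mem_sdiff] at hi ⊢
      grind
    have h4 := Finset.card_le_card hsub
    have h5 := Finset.card_union_le
      (I.filter (fun i => ∀ v ∈ e i, v ∈ A) ∪ I.filter (fun i => ∀ v ∈ e i, v ∈ T \ A))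
      (I.filter (fun i => (∀ v ∈ e i, v ∈ T) ∧ (∃ v ∈ e i, v ∈ A) ∧
          (∃ v ∈ e i, v ∈ T \ A)))
    have h6 := Finset.card_union_le
      (I.filter (fun i => ∀ v ∈ e i, v ∈ A)) (I.filter (fun i => ∀ v ∈ e i, v ∈ T \ A))
    have h7 : n = (A.card - 1) + ((T \ A).card - 1) + 1 := by omega
    have h8 : k * n = k * (A.card - 1) + k * ((T \ A).card - 1) + k := by
      conv_lhs => rw [h7]
      ring
    omega
  · push Not at hcut
    rcases (I.filter (fun i => ∀ v ∈ e i, v ∈ T)).eq_empty_or_nonempty with h0 | hne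
    · rw [h0]
      simp
    exfalso
    obtain ⟨i, hi, hmax⟩ := Finset.exists_max_image _ id hne
    rw [Finset.mem_filter] at hi
    obtain ⟨S, hTS, hS⟩ := exists_max (graphOfPrefix e (i : ℕ)) k (T : Set V) (by
      apply isKEdgeConnectedSet_of_cuts
      · have : T.Nonempty := Finset.card_pos.1 (by omega)
        exact_mod_cast this
      intro A hA hA0 hB0
      have hAT : A.toFinset ⊆ T := by
        intro v hv
        exact hA (by simpa using hv)
      have hc := hcut A.toFinset hAT (by simpa using hA0) (by
        obtain ⟨v, hv⟩ := hB0
        exact ⟨v, by simpa using hv⟩)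
      set J := I.filter (fun i => (∀ v ∈ e i, v ∈ T) ∧ (∃ v ∈ e i, v ∈ A.toFinset) ∧
          (∃ v ∈ e i, v ∈ T \ A.toFinset)) with hJ
      refine ⟨(J.erase i).val.map e, ?_, ?_, ?_⟩
      · unfold induce graphOfPrefix ofEdges
        refine (@Multiset.le_filter _ _ (_) _ _).2 ⟨(@Multiset.le_filter _ _ (_) _ _).2 ⟨map_le_prefix e i _ ?_, ?_⟩, ?_⟩
        · intro j hj
          rw [Finset.mem_erase, hJ, Finset.mem_filter] at hj
          have := hmax j (Finset.mem_filter.2 ⟨hj.2.1, hj.2.2.1⟩)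
          exact lt_of_le_of_ne this (fun h => hj.1 (Fin.ext h))
        · intro f hf
          obtain ⟨j, -, rfl⟩ := Multiset.mem_map.1 hf
          exact he j
        · intro f hf
          obtain ⟨j, hj, rfl⟩ := Multiset.mem_map.1 hf
          have hj' : j ∈ J.erase i := hj
          rw [Finset.mem_erase, hJ, Finset.mem_filter] at hj'
          exact fun v hv => hj'.2.2.1 v hv
      · rw [Multiset.card_map]
        have := Finset.pred_card_le_card_erase (s := J) (a := i)
        change k ≤ (J.erase i).card
        omega
      · intro f hf
        obtain ⟨j, hj, rfl⟩ := Multiset.mem_map.1 hf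
        have hj' : j ∈ J.erase i := hj
        rw [Finset.mem_erase, hJ, Finset.mem_filter] at hj'
        simpa using hj'.2.2.2)
    exact hI i hi.1 ⟨S, hS, fun v hv => hTS (hi.2 v hv)⟩

end Multigraph

theorem count_interconnection_insertions_le {V : Type u} [Fintype V]
    (k : ℕ) (hk : 3 ≤ k) {m : ℕ} (e : Fin m → Sym2 V)
    (he : ∀ i : Fin m, ¬ (e i).IsDiag) :
    {i : Fin m | ¬ ∃ S : Set V,
        (Multigraph.graphOfPrefix e (i : ℕ)).IsMaxKEdgeConnectedSubgraph k S ∧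
          ∀ v ∈ e i, v ∈ S}.ncard ≤ k * (Fintype.card V - 1) := by
  classical
  rcases isEmpty_or_nonempty V with hV | hV
  · have : IsEmpty (Fin m) := ⟨fun i => hV.false (e i).out.1⟩
    exact (congrArg Set.ncard (Set.eq_empty_of_isEmpty _)).trans_le (by simp)
  · have hpos : 0 < Fintype.card V := Fintype.card_pos
    rw [Set.ncard_eq_toFinset_card']
    have := Multigraph.count_inside k e he ({i : Fin m | ¬ ∃ S : Set V,
        (Multigraph.graphOfPrefix e (i : ℕ)).IsMaxKEdgeConnectedSubgraph k S ∧
          ∀ v ∈ e i, v ∈ S}.toFinset) (fun i hi => by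
            rw [Set.mem_toFinset] at hi
            exact hi) (Fintype.card V - 1) Finset.univ (by rw [Finset.card_univ]; omega)
    rw [Finset.filter_true_of_mem (fun _ _ _ _ => Finset.mem_univ _)] at this
    exact this
end

section
/- Let G be a multigraph, k ≥ 1, and let G[S] be a maximal k-edge-connected subgraph of G. Let Q be the multigraph obtained from G by contracting S into a single new vertex v_S: the vertices of Q are (V(G) ∖ S) ∪ {v_S}; every edge of G with both endpoints outside S is kept; every edge of G with exactly one endpoint in S becomes an edge between its other endpoint and v_S (multiplicities kept); every edge with both endpoints in S is discarded. Then the vertex sets of the maximal k-edge-connected subgraphs of Q are precisely {v_S} together with the vertex sets of the maximal k-edge-connected subgraphs of G other than S. -/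
universe u

namespace Multigraph

variable {V : Type u}

open Classical in
/-- Contract the vertex set `S` of `G` into a single new vertex `none`; vertices outside
`S` survive as `some v`, edges inside `S` are discarded, all other edges are kept. -/
noncomputable def contract (G : Multigraph V) (S : Set V) :
    Multigraph (Option {v : V // v ∉ S}) :=
  ofEdges (G.edges.map (Sym2.map (fun v => if h : v ∈ S then none else some ⟨v, h⟩)))

end Multigraph

namespace Multigraph

def Cr {V : Type u} (A : Set V) (e : Sym2 V) : Prop := (∃ u ∈ e, u ∈ A) ∧ ∃ v ∈ e, v ∉ A

open Classical in
noncomputable def cut {V : Type u} (G : Multigraph V) (U A : Set V) : ℕ :=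
  G.edges.countP (fun e => (∀ v ∈ e, v ∈ U) ∧ Cr A e)

open Classical in
theorem le_lam_iff {V : Type u} (G : Multigraph V) (k : ℕ) (x y : V) :
    (k : ℕ∞) ≤ G.lam x y ↔
      ∀ A : Set V, x ∈ A → y ∉ A → k ≤ G.edges.countP (Cr A) := by
  constructor
  · intro h A hx hy
    have h2 : G.lam x y ≤ ((G.edges.countP (Cr A) : ℕ) : ℕ∞) := by
      apply sInf_le
      refine ⟨G.edges.filter (Cr A), Multiset.filter_le _ _, ?_, ?_⟩
      · intro hr
        apply hy
        have hr' : Relation.ReflTransGen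
          (fun a b => s(a, b) ∈ G.edges - G.edges.filter (Cr A)) x y := hr
        clear hy hr h
        induction hr' with
        | refl => exact hx
        | tail _ hab ih =>
          rw [Multiset.sub_filter_eq_filter_not, Multiset.mem_filter] at hab
          by_contra hc
          exact hab.2 ⟨⟨_, Sym2.mem_mk_left _ _, ih⟩, ⟨_, Sym2.mem_mk_right _ _, hc⟩⟩
      · rw [Multiset.countP_eq_card_filter]
    exact_mod_cast h.trans h2
  · intro h
    apply le_sInf
    rintro n ⟨F, hF, hr, rfl⟩
    have h1 := h {v | (G.deleteEdges F).Reachable x v} Relation.ReflTransGen.refl hr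
    refine Nat.cast_le.mpr (h1.trans ?_)
    rw [Multiset.countP_eq_card_filter]
    apply Multiset.card_le_card
    rw [Multiset.le_iff_count]
    intro e
    rw [Multiset.count_filter]
    split_ifs with hc
    · by_contra hlt
      have hmem : e ∈ G.edges - F := by
        rw [← Multiset.count_pos, Multiset.count_sub]
        omega
      obtain ⟨⟨u, hu, huA⟩, ⟨v, hv, hvA⟩⟩ := hc
      have huv : u ≠ v := fun hh => hvA (hh ▸ huA)
      rw [(Sym2.mem_and_mem_iff huv).mp ⟨hu, hv⟩] at hmem
      exact hvA (Relation.ReflTransGen.tail huA hmem)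
    · exact Nat.zero_le _

theorem kec_iff {V : Type u} (G : Multigraph V) (k : ℕ) (U : Set V) :
    G.IsKEdgeConnectedSet k U ↔ U.Nonempty ∧
      ∀ A : Set V, ∀ x ∈ U, ∀ y ∈ U, x ∈ A → y ∉ A → k ≤ G.cut U A := by
  unfold IsKEdgeConnectedSet
  have key : ∀ A : Set V, ∀ (d : DecidablePred (Cr A)),
      @Multiset.countP _ (Cr A) d (G.induce U).edges = G.cut U A := by
    intro A d
    unfold induce cut
    simp only [Multiset.countP_filter]
    congr 1
    ext e
    exact and_comm
  simp only [le_lam_iff, key]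
  constructor
  · rintro ⟨h1, h2⟩
    exact ⟨h1, fun A x hx y hy => h2 x hx y hy A⟩
  · rintro ⟨h1, h2⟩
    exact ⟨h1, fun x hx y hy A => h2 A x hx y hy⟩

theorem cut_mono {V : Type u} (G : Multigraph V) {U W : Set V} (h : U ⊆ W) (A : Set V) :
    G.cut U A ≤ G.cut W A := by
  classical
  unfold cut
  simp only [Multiset.countP_eq_card_filter]
  apply Multiset.card_le_card
  exact Multiset.monotone_filter_right _ (fun e he => ⟨fun v hv => h (he.1 v hv), he.2⟩)

theorem cut_congr {V : Type u} (G : Multigraph V) {U A B : Set V}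
    (h : ∀ v ∈ U, v ∈ A ↔ v ∈ B) : G.cut U A = G.cut U B := by
  classical
  unfold cut
  congr 1
  ext e
  constructor
  · rintro ⟨h1, ⟨u, hu, huA⟩, v, hv, hvA⟩
    exact ⟨h1, ⟨u, hu, (h u (h1 u hu)).1 huA⟩, v, hv, fun hh => hvA ((h v (h1 v hv)).2 hh)⟩
  · rintro ⟨h1, ⟨u, hu, huA⟩, v, hv, hvA⟩
    exact ⟨h1, ⟨u, hu, (h u (h1 u hu)).2 huA⟩, v, hv, fun hh => hvA ((h v (h1 v hv)).1 hh)⟩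

theorem kec_union {V : Type u} (G : Multigraph V) (k : ℕ) {X Y : Set V}
    (hX : G.IsKEdgeConnectedSet k X) (hY : G.IsKEdgeConnectedSet k Y) {z : V}
    (hzX : z ∈ X) (hzY : z ∈ Y) : G.IsKEdgeConnectedSet k (X ∪ Y) := by
  rw [kec_iff] at *
  refine ⟨⟨z, Or.inl hzX⟩, ?_⟩
  intro A x hx y hy hxA hyA
  have mX := G.cut_mono (Set.subset_union_left (s := X) (t := Y)) A
  have mY := G.cut_mono (Set.subset_union_right (s := X) (t := Y)) A
  by_cases hz : z ∈ A
  · rcases hy with hy | hy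
    · exact (hX.2 A z hzX y hy hz hyA).trans mX
    · exact (hY.2 A z hzY y hy hz hyA).trans mY
  · rcases hx with hx | hx
    · exact (hX.2 A x hx z hzX hxA hz).trans mX
    · exact (hY.2 A x hx z hzY hxA hz).trans mY

open Classical in
/-- The contraction map. -/
noncomputable def cmap {V : Type u} (S : Set V) (v : V) : Option {v : V // v ∉ S} :=
  if h : v ∈ S then none else some ⟨v, h⟩

theorem cmap_none {V : Type u} {S : Set V} {v : V} : cmap S v = none ↔ v ∈ S := by
  unfold cmap
  split_ifs with h <;> simp [h]

theorem cmap_some {V : Type u} {S : Set V} {v : V} (h : v ∉ S) : cmap S v = some ⟨v, h⟩ := by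
  simp [cmap, h]

theorem cmap_inj {V : Type u} {S : Set V} {v w : V} (h : cmap S v = cmap S w) (hv : v ∉ S) :
    v = w := by
  by_cases hw : w ∈ S
  · rw [cmap_none.2 hw, cmap_none] at h
    exact absurd h hv
  · rw [cmap_some hv, cmap_some hw] at h
    simpa using h

theorem cmap_surj {V : Type u} {S : Set V} (hS : S.Nonempty) : Function.Surjective (cmap S) := by
  rintro (_ | ⟨v, h⟩)
  · obtain ⟨s, hs⟩ := hS
    exact ⟨s, cmap_none.2 hs⟩
  · exact ⟨v, cmap_some h⟩

theorem cut_contract {V : Type u} (G : Multigraph V) (S : Set V)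
    (T A : Set (Option {v : V // v ∉ S})) :
    (G.contract S).cut T A = G.cut (cmap S ⁻¹' T) (cmap S ⁻¹' A) := by
  classical
  have he : (G.contract S).edges =
      (G.edges.map (Sym2.map (cmap S))).filter (fun e => ¬ e.IsDiag) := by
    unfold contract ofEdges cmap
    dsimp only
    congr
  unfold cut
  rw [he, Multiset.countP_filter, Multiset.countP_map, Multiset.countP_eq_card_filter]
  congr 1
  apply Multiset.filter_congr
  intro e _
  induction e using Sym2.ind with
  | _ a b =>
    simp only [Cr, Sym2.map_mk, Sym2.mem_iff, Sym2.mk_isDiag_iff, forall_eq_or_imp, forall_eq,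
      exists_eq_or_imp, exists_eq_left, Set.mem_preimage]
    constructor
    · exact fun h => h.1
    · intro h
      refine ⟨h, fun hab => ?_⟩
      rw [hab] at h
      tauto

theorem kec_contract {V : Type u} (G : Multigraph V) (k : ℕ) (S : Set V)
    (hS : G.IsKEdgeConnectedSet k S) (T : Set (Option {v : V // v ∉ S})) :
    (G.contract S).IsKEdgeConnectedSet k T ↔ G.IsKEdgeConnectedSet k (cmap S ⁻¹' T) := by
  have hsur := cmap_surj hS.1
  rw [kec_iff] at hS
  rw [kec_iff, kec_iff]
  constructor
  · rintro ⟨⟨t, ht⟩, h⟩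
    obtain ⟨v, rfl⟩ := hsur t
    refine ⟨⟨v, ht⟩, ?_⟩
    intro B x hx y hy hxB hyB
    by_cases hc : S ⊆ cmap S ⁻¹' T ∧ (∃ a ∈ S, a ∈ B) ∧ (∃ b ∈ S, b ∉ B)
    · obtain ⟨hsub, ⟨a, ha, haB⟩, b, hb, hbB⟩ := hc
      exact (hS.2 B a ha b hb haB hbB).trans (G.cut_mono hsub B)
    · have hsat : ∀ v ∈ cmap S ⁻¹' T, v ∈ B ↔ v ∈ cmap S ⁻¹' (cmap S '' B) := by
        intro v hv
        constructor
        · exact fun hvB => ⟨v, hvB, rfl⟩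
        · rintro ⟨w, hw, hwv⟩
          by_contra hvB
          by_cases hwS : w ∈ S
          · have hvS : v ∈ S := by
              rw [← cmap_none, ← hwv, cmap_none]
              exact hwS
            apply hc
            refine ⟨?_, ⟨w, hwS, hw⟩, v, hvS, hvB⟩
            intro s hs
            have hv' : cmap S v ∈ T := hv
            rw [cmap_none.2 hvS] at hv'
            change cmap S s ∈ T
            rw [cmap_none.2 hs]
            exact hv'
          · exact hvB (cmap_inj hwv hwS ▸ hw)
      rw [G.cut_congr hsat, ← cut_contract]
      refine h _ (cmap S x) hx (cmap S y) hy ⟨x, hxB, rfl⟩ ?_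
      intro hh
      exact hyB ((hsat y hy).2 hh)
  · rintro ⟨⟨v, hv⟩, h⟩
    refine ⟨⟨_, hv⟩, ?_⟩
    intro A x hx y hy hxA hyA
    obtain ⟨x, rfl⟩ := hsur x
    obtain ⟨y, rfl⟩ := hsur y
    rw [cut_contract]
    exact h _ x hx y hy hxA hyA

end Multigraph

open Multigraph in
theorem contract_max_kec_subgraphs {V : Type u} [Fintype V]
    (G : Multigraph V) (k : ℕ) (hk : 1 ≤ k) (S : Set V)
    (hS : G.IsMaxKEdgeConnectedSubgraph k S) :
    ∀ T : Set (Option {v : V // v ∉ S}),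
      (G.contract S).IsMaxKEdgeConnectedSubgraph k T ↔
        (T = {(none : Option {v : V // v ∉ S})} ∨
          ∃ U : Set V, G.IsMaxKEdgeConnectedSubgraph k U ∧ U ≠ S ∧
            T = {w | ∃ (v : V) (h : v ∉ S), v ∈ U ∧ w = some ⟨v, h⟩}) := by
  intro T
  have hne := hS.1.1
  have hsur := cmap_surj hne
  have hkec := kec_contract G k S hS.1
  have hdisj : ∀ X, G.IsKEdgeConnectedSet k X → ∀ z ∈ X, z ∈ S → X ⊆ S := by
    intro X hX z hzX hzS
    rw [← hS.2 _ Set.subset_union_left (kec_union G k hS.1 hX hzS hzX)]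
    exact Set.subset_union_right
  have hnonepre : cmap S ⁻¹' {none} = S := by
    ext v
    exact cmap_none
  have hnone : ∀ T', none ∈ T' → (G.contract S).IsKEdgeConnectedSet k T' → T' = {none} := by
    intro T' h1 h2
    rw [hkec] at h2
    have h3 := hS.2 _ (fun s hs => by
      change cmap S s ∈ T'
      rw [cmap_none.2 hs]
      exact h1) h2
    exact hsur.preimage_injective (h3.trans hnonepre.symm)
  have hset : ∀ U : Set V, (∀ v ∈ U, v ∉ S) →
      cmap S ⁻¹' {w | ∃ (v : V) (h : v ∉ S), v ∈ U ∧ w = some ⟨v, h⟩} = U := by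
    intro U hU
    ext v
    constructor
    · rintro ⟨w, hw, hwU, hvw⟩
      rw [← cmap_some hw] at hvw
      rw [← cmap_inj hvw.symm hw]
      exact hwU
    · intro hv
      exact ⟨v, hU v hv, hv, cmap_some _⟩
  constructor
  · intro hT
    by_cases hn : none ∈ T
    · exact Or.inl (hnone T hn hT.1)
    · right
      have hU := (hkec T).1 hT.1
      have hUS : ∀ v ∈ cmap S ⁻¹' T, v ∉ S := by
        intro v hv hvS
        apply hn
        rw [← cmap_none.2 hvS]
        exact hv
      refine ⟨cmap S ⁻¹' T, ⟨hU, ?_⟩, ?_, ?_⟩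
      · intro W hUW hW
        obtain ⟨u, hu⟩ := hU.1
        have hWS : ∀ v ∈ W, v ∉ S := fun v hv hvS =>
          hUS u hu (hdisj W hW v hv hvS (hUW hu))
        have hWe := hset W hWS
        have h3 := hT.2 {w | ∃ (v : V) (h : v ∉ S), v ∈ W ∧ w = some ⟨v, h⟩} ?_ ?_
        · rw [← hWe, h3]
        · rw [← hsur.preimage_subset_preimage_iff, hWe]
          exact hUW
        · rw [hkec, hWe]
          exact hW
      · intro h
        obtain ⟨s, hs⟩ := hne
        exact hUS s (h.symm.subset hs) hs
      · exact hsur.preimage_injective (hset _ hUS).symm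
  · rintro (rfl | ⟨U, hU, hne', rfl⟩)
    · refine ⟨?_, fun T' h1 h2 => hnone T' (h1 rfl) h2⟩
      rw [hkec, hnonepre]
      exact hS.1
    · have hUS : ∀ v ∈ U, v ∉ S := fun v hv hvS =>
        hne' (hU.2 S (hdisj U hU.1 v hv hvS) hS.1).symm
      have hUe := hset U hUS
      refine ⟨?_, ?_⟩
      · rw [hkec, hUe]
        exact hU.1
      · intro T' h1 h2
        apply hsur.preimage_injective
        rw [hUe]
        refine hU.2 _ ?_ ((hkec T').1 h2)
        rw [← hUe]
        exact Set.preimage_mono h1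
end

section
/- Let G be a multigraph, k ≥ 1, and let x, y be two vertices lying in the same maximal k-edge-connected subgraph of G. Let G' be the multigraph obtained from G by adding one new edge with endpoints x and y. Then the partition of V(G) into the vertex sets of the maximal k-edge-connected subgraphs of G' is the same as the corresponding partition for G; in particular, a newly inserted edge can change the maximal k-edge-connected subgraphs only if its endpoints lie in different maximal k-edge-connected subgraphs. -/
universe u

namespace Multigraph

variable {V : Type u}

/-- Add one new edge with endpoints `x` and `y` (discarded if it would be a self-loop). -/
noncomputable def addEdge (G : Multigraph V) (x y : V) : Multigraph V :=
  ofEdges (s(x, y) ::ₘ G.edges)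

end Multigraph

namespace Multigraph

open Classical in
/-- Edge-deletion characterization of `k`-edge-connected sets. -/
theorem kec_iff_s11 {V : Type u} (G : Multigraph V) (k : ℕ) (S : Set V) :
    G.IsKEdgeConnectedSet k S ↔ S.Nonempty ∧ ∀ a ∈ S, ∀ b ∈ S, ∀ F : Multiset (Sym2 V),
      Multiset.card F < k → MReach ((G.induce S).edges - F) a b := by
  unfold IsKEdgeConnectedSet lam
  refine and_congr_right fun _ => forall₂_congr fun a _ => forall₂_congr fun b _ => ?_
  rw [le_sInf_iff]
  constructor
  · intro h F hF
    by_contra hc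
    have hE : (G.induce S).edges - F = (G.induce S).edges - ((G.induce S).edges ∩ F) := by
      ext e
      simp only [Multiset.count_sub, Multiset.count_inter]
      omega
    have h1 := h _ ⟨(G.induce S).edges ∩ F, Multiset.inter_le_left, by
      unfold Reachable deleteEdges
      rw [hE] at hc
      exact hc, rfl⟩
    have h2 : k ≤ Multiset.card ((G.induce S).edges ∩ F) := by exact_mod_cast h1
    have h3 := Multiset.card_le_card
      (Multiset.inter_le_right : (G.induce S).edges ∩ F ≤ F)
    omega
  · rintro h n ⟨F, -, hr, rfl⟩
    by_contra hc
    have h2 : Multiset.card F < k := by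
      have := not_le.mp hc
      exact_mod_cast this
    exact hr (h F h2)

theorem MReach.mono {V : Type u} {E E' : Multiset (Sym2 V)} (h : E ≤ E') {a b : V}
    (hr : MReach E a b) : MReach E' a b :=
  Relation.ReflTransGen.mono (fun _ _ he => Multiset.mem_of_le h he) a b hr

open Classical in
theorem addEdge_edges {V : Type u} (G : Multigraph V) {x y : V} (hxy : x ≠ y) :
    (G.addEdge x y).edges = s(x, y) ::ₘ G.edges := by
  unfold addEdge ofEdges
  refine Multiset.filter_eq_self.mpr fun e he => ?_
  rcases Multiset.mem_cons.mp he with rfl | he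
  · simpa using hxy
  · exact G.loopless e he

open Classical in
theorem induce_le_of_subset {V : Type u} (G : Multigraph V) {S T : Set V} (h : S ⊆ T) :
    (G.induce S).edges ≤ (G.induce T).edges :=
  Multiset.monotone_filter_right _ fun _ he v hv => h (he v hv)

open Classical in
theorem kec_addEdge {V : Type u} (G : Multigraph V) (k : ℕ) {x y : V} (hxy : x ≠ y)
    {S : Set V} (h : G.IsKEdgeConnectedSet k S) : (G.addEdge x y).IsKEdgeConnectedSet k S := by
  rw [kec_iff_s11] at h ⊢
  refine ⟨h.1, fun a ha b hb F hF => (h.2 a ha b hb F hF).mono (tsub_le_tsub_right ?_ F)⟩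
  unfold induce
  refine Multiset.filter_le_filter _ ?_
  rw [addEdge_edges G hxy]
  exact Multiset.le_cons_self _ _

theorem kec_of_addEdge {V : Type u} (G : Multigraph V) (k : ℕ) {x y : V} (hxy : x ≠ y)
    {S T : Set V} (hS : G.IsKEdgeConnectedSet k S) (hx : x ∈ S) (hy : y ∈ S)
    (hT : (G.addEdge x y).IsKEdgeConnectedSet k T) :
    ∃ T', T ⊆ T' ∧ G.IsKEdgeConnectedSet k T' := by
  classical
  rw [kec_iff_s11] at hS hT
  by_cases hm : x ∈ T ∧ y ∈ T
  · refine ⟨T ∪ S, Set.subset_union_left, (kec_iff_s11 _ _ _).mpr ⟨⟨x, Or.inr hx⟩, ?_⟩⟩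
    intro a ha b hb F hF
    have key : ∀ a ∈ S, ∀ b ∈ S, MReach ((G.induce (T ∪ S)).edges - F) a b :=
      fun a ha b hb => (hS.2 a ha b hb F hF).mono
        (tsub_le_tsub_right (G.induce_le_of_subset Set.subset_union_right) F)
    have key2 : ∀ a ∈ T, ∀ b ∈ T, MReach ((G.induce (T ∪ S)).edges - F) a b := by
      intro a ha b hb
      have h := hT.2 a ha b hb F hF
      unfold MReach at h
      induction h with
      | refl => exact Relation.ReflTransGen.refl
      | @tail c d _ hcd ih =>
        have hmem := Multiset.mem_of_le tsub_le_self hcd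
        have hc : c ∈ T := (Multiset.mem_filter.mp hmem).2 c (by simp)
        refine Relation.ReflTransGen.trans (ih hc) ?_
        by_cases he : s(c, d) = s(x, y)
        · rcases Sym2.eq_iff.mp he with ⟨rfl, rfl⟩ | ⟨rfl, rfl⟩
          · exact key _ hx _ hy
          · exact key _ hy _ hx
        · refine Relation.ReflTransGen.single ?_
          have h1 := Multiset.count_le_of_le s(c, d)
            (G.induce_le_of_subset (Set.subset_union_left : T ⊆ T ∪ S))
          have h2 : Multiset.count s(c, d) ((G.addEdge x y).induce T).edges
              = Multiset.count s(c, d) (G.induce T).edges := by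
            unfold induce
            simp only [Multiset.count_filter, addEdge_edges G hxy,
              Multiset.count_cons_of_ne he]
          rw [← Multiset.count_pos, Multiset.count_sub] at hcd ⊢
          omega
    have hax : MReach ((G.induce (T ∪ S)).edges - F) a x :=
      ha.elim (fun h => key2 a h x hm.1) (fun h => key a h x hx)
    have hxb : MReach ((G.induce (T ∪ S)).edges - F) x b :=
      hb.elim (fun h => key2 x hm.1 b h) (fun h => key x hx b h)
    exact Relation.ReflTransGen.trans hax hxb
  · refine ⟨T, subset_rfl, (kec_iff_s11 _ _ _).mpr ?_⟩
    have hE : ((G.addEdge x y).induce T).edges = (G.induce T).edges := by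
      unfold induce
      simp only [addEdge_edges G hxy]
      refine Multiset.filter_cons_of_neg _ ?_
      simpa using hm
    rwa [hE] at hT

end Multigraph

theorem addEdge_within_max_kec_preserves_partition {V : Type u} [Fintype V]
    (G : Multigraph V) (k : ℕ) (hk : 1 ≤ k) (x y : V) (hxy : x ≠ y)
    (hsame : ∃ S : Set V, G.IsMaxKEdgeConnectedSubgraph k S ∧ x ∈ S ∧ y ∈ S) :
    ∀ S : Set V,
      (G.addEdge x y).IsMaxKEdgeConnectedSubgraph k S ↔
        G.IsMaxKEdgeConnectedSubgraph k S := by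
  obtain ⟨S₀, hS₀, hx, hy⟩ := hsame
  intro S
  constructor
  · rintro ⟨h1, h2⟩
    obtain ⟨T, hST, hT⟩ := G.kec_of_addEdge k hxy hS₀.1 hx hy h1
    have := h2 T hST (G.kec_addEdge k hxy hT)
    subst this
    exact ⟨hT, fun U hU hUk => h2 U hU (G.kec_addEdge k hxy hUk)⟩
  · rintro ⟨h1, h2⟩
    refine ⟨G.kec_addEdge k hxy h1, fun T hST hT => ?_⟩
    obtain ⟨U, hTU, hU⟩ := G.kec_of_addEdge k hxy hS₀.1 hx hy hT
    have := h2 U (hST.trans hTU) hU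
    exact Set.Subset.antisymm (this ▸ hTU) hST
end
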